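/- arXiv:1706.01573 — 2 statements merged into one kernel-verified Lean document; each statement's English description precedes it below -/
import Mathlib

section
/- Let x : ℕ → ℝ satisfy ∑_{k=0}^{n} \binom{n}{k}(-1)^k x_k = x_n for every n. Define y : ℕ → ℝ by y_0 = 0 and y_n = ∑_{k=0}^{n-1} (1/2)^{n-k} x_k for n ≥ 1. Then ∑_{k=0}^{n} \binom{n}{k}(-1)^k y_k = -y_n for every n. -/
/-!
Let `T` be the binomial transform, `S` the left shift and `G_c` the convolution with
`0, 1, c, c ^ 2, …`. Since `T a n = (-1) ^ n * (Δ^n a) 0` and `Δ = S - 1`, one has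
`S T = T (1 - S)`. The sequence `y = G_c x` is determined by `y 0 = 0` and `S y = c y + x`, so
`z = -T y` satisfies `z 0 = 0` and `S z = (1 - c) z + T x`, that is, `T G_c = -G_(1 - c) T`. At the
fixed point `c = 1 / 2` of `c ↦ 1 - c`, the operators `T` and `G_c` anticommute, so `G_c` maps the
eigenspace of `T` for `1` into the one for `-1`.
-/

open Finset fwdDiff

section BinomialTransform

variable {M : Type*} [AddCommGroup M]

/-- The binomial transform of a sequence. Its fixed points are the invariant sequences of the first
kind, and the sequences it negates are the inverse invariant ones. The coefficients are integers
acting on `M`, so that no scalar ring has to be chosen. -/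
def binomialTransform (a : ℕ → M) (n : ℕ) : M :=
  ∑ k ∈ range (n + 1), ((n.choose k : ℤ) * (-1) ^ k) • a k

theorem binomialTransform_eq_sum_mul {R : Type*} [Ring R] (a : ℕ → R) (n : ℕ) :
    binomialTransform a n = ∑ k ∈ range (n + 1), (n.choose k : R) * (-1) ^ k * a k := by
  simp [binomialTransform, zsmul_eq_mul]

@[simp]
theorem binomialTransform_apply_zero (a : ℕ → M) : binomialTransform a 0 = a 0 := by
  simp [binomialTransform]

theorem binomialTransform_add (a b : ℕ → M) :
    binomialTransform (a + b) = binomialTransform a + binomialTransform b := by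
  ext n
  simp only [binomialTransform, Pi.add_apply, smul_add, sum_add_distrib]

theorem binomialTransform_smul {R : Type*} [Monoid R] [DistribMulAction R M] (c : R) (a : ℕ → M) :
    binomialTransform (c • a) = c • binomialTransform a := by
  ext n
  simp only [binomialTransform, Pi.smul_apply, smul_sum, smul_comm c]

theorem binomialTransform_eq_fwdDiff_iter (a : ℕ → M) (n : ℕ) :
    binomialTransform a n = (-1 : ℤ) ^ n • (Δ_[1])^[n] a 0 := by
  rw [binomialTransform, fwdDiff_iter_eq_sum_shift, smul_sum]
  refine sum_congr rfl fun k hk ↦ ?_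
  obtain ⟨j, rfl⟩ := Nat.exists_eq_add_of_le (mem_range_succ_iff.mp hk)
  have sign : (-1 : ℤ) ^ (k + j) * (-1) ^ j = (-1) ^ k := by
    rw [pow_add, mul_assoc, ← mul_pow, neg_one_mul, neg_neg, one_pow, mul_one]
  rw [smul_smul, Nat.add_sub_cancel_left, ← mul_assoc, sign, mul_comm, zero_add, smul_eq_mul,
    mul_one]

theorem binomialTransform_apply_succ (a : ℕ → M) (n : ℕ) :
    binomialTransform a (n + 1) =
      binomialTransform a n - binomialTransform (fun k ↦ a (k + 1)) n := by
  have shift : (fun k ↦ a (k + 1)) = a + Δ_[1] a := by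
    ext k
    simp [fwdDiff]
  rw [shift, binomialTransform_add, Pi.add_apply, sub_add_cancel_left,
    binomialTransform_eq_fwdDiff_iter a, binomialTransform_eq_fwdDiff_iter (Δ_[1] a),
    Function.iterate_succ_apply, pow_succ, mul_neg_one, neg_smul]

end BinomialTransform

section GeomConvolution

variable {R M : Type*} [Semiring R] [AddCommMonoid M] [Module R M]

/-- The convolution of a sequence with the delayed geometric sequence `0, 1, c, c ^ 2, …`.
The matrix `(-J(0) J(-2)⁻¹)ᵀ` is half of this operator for `c = 1 / 2`. -/
def geomConvolution (c : R) (x : ℕ → M) (n : ℕ) : M :=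
  ∑ k ∈ range n, c ^ (n - 1 - k) • x k

@[simp]
theorem geomConvolution_apply_zero (c : R) (x : ℕ → M) : geomConvolution c x 0 = 0 :=
  sum_range_zero _

theorem geomConvolution_apply_succ (c : R) (x : ℕ → M) (n : ℕ) :
    geomConvolution c x (n + 1) = c • geomConvolution c x n + x n := by
  simp only [geomConvolution, sum_range_succ, smul_sum, smul_smul, ← pow_succ', Nat.add_sub_cancel,
    Nat.sub_self, pow_zero, one_smul]
  congr 1
  refine sum_congr rfl fun k hk ↦ ?_
  have := mem_range.mp hk
  congr 2
  lia

theorem geomConvolution_smul_self (c : R) (x : ℕ → M) (n : ℕ) :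
    geomConvolution c (c • x) n = ∑ k ∈ range n, c ^ (n - k) • x k := by
  refine sum_congr rfl fun k hk ↦ ?_
  have := mem_range.mp hk
  rw [Pi.smul_apply, smul_smul, ← pow_succ]
  congr 2
  lia

theorem eq_geomConvolution_smul_self {c : R} {x y : ℕ → M} (hy0 : y 0 = 0)
    (hy : ∀ n, 1 ≤ n → y n = ∑ k ∈ range n, c ^ (n - k) • x k) :
    y = geomConvolution c (c • x) := by
  ext (_ | n)
  · rw [hy0, geomConvolution_apply_zero]
  · rw [hy _ n.succ_pos, geomConvolution_smul_self]

end GeomConvolution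

theorem stmt12_general {R M : Type*} [Ring R] [AddCommGroup M] [Module R M] (c : R) (x : ℕ → M) :
    binomialTransform (geomConvolution c x) =
      -geomConvolution (1 - c) (binomialTransform x) := by
  have shift : (fun k ↦ geomConvolution c x (k + 1)) = c • geomConvolution c x + x :=
    funext (geomConvolution_apply_succ c x)
  ext n
  induction n with
  | zero => simp
  | succ n ih =>
    set y := geomConvolution c x
    set z := geomConvolution (1 - c) (binomialTransform x) with hz
    calc binomialTransform y (n + 1)
      _ = binomialTransform y n - (c • binomialTransform y n + binomialTransform x n) := by
        rw [binomialTransform_apply_succ, shift, binomialTransform_add, binomialTransform_smul,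
          Pi.add_apply, Pi.smul_apply]
      _ = (1 - c) • binomialTransform y n - binomialTransform x n := by
        rw [sub_smul, one_smul, sub_add_eq_sub_sub]
      _ = -((1 - c) • z n + binomialTransform x n) := by
        rw [ih, Pi.neg_apply, smul_neg, neg_add']
      _ = (-z) (n + 1) := by
        rw [Pi.neg_apply, hz, geomConvolution_apply_succ]

/-- if `x` is an invariant sequence of the first kind, then
`y = (-J(0) J(-2)⁻¹)ᵀ x`, i.e. `y 0 = 0`, `y n = ∑_{k<n} (1/2)^(n-k) x k` for `n ≥ 1`,
is an inverse invariant sequence of the first kind. -/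
theorem stmt12 (x : ℕ → ℝ)
    (hx : ∀ n, ∑ k ∈ Finset.range (n + 1), (Nat.choose n k : ℝ) * (-1) ^ k * x k = x n)
    (y : ℕ → ℝ) (hy0 : y 0 = 0)
    (hy : ∀ n, 1 ≤ n → y n = ∑ k ∈ Finset.range n, (1 / 2 : ℝ) ^ (n - k) * x k) :
    ∀ n, ∑ k ∈ Finset.range (n + 1), (Nat.choose n k : ℝ) * (-1) ^ k * y k = -y n := by
  simp only [← binomialTransform_eq_sum_mul] at hx ⊢
  rw [eq_geomConvolution_smul_self (c := (1 / 2 : ℝ)) (x := x) hy0 hy, stmt12_general,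
    binomialTransform_smul, funext hx, sub_half]
  exact fun _ ↦ rfl
end

section
/- Define operators on sequences ℕ → ℝ by: (S₁ x)_n = ∑_{j} \binom{j}{n-j} x_j (a finite sum over ⌈n/2⌉ ≤ j ≤ n), and (S₋₁ x)_0 = x_0, (S₋₁ x)_n = x_n + 2 x_{n-1} for n ≥ 1. Let x : ℕ → ℝ be finitely supported and, for a positive integer m, let z = S_{l_m} ∘ S_{l_{m-1}} ∘ ⋯ ∘ S_{l_1} applied to x, where l_i = (-1)^{i+1} (so the first operator applied is S₁ and the operators alternate). Then z is finitely supported, and: if m is odd, ∑_{k=n}^∞ \binom{k}{n}(-1)^k z_k = z_n for every n; if m is even, ∑_{k=n}^∞ \binom{k}{n}(-1)^k z_k = -z_n for every n. -/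
/-- Multiplication by the matrix `P^{T↓}`: `(S1 x) n = ∑_j choose j (n-j) * x j`
(the terms vanish unless `⌈n/2⌉ ≤ j ≤ n`). -/
noncomputable def S1 (x : ℕ → ℝ) (n : ℕ) : ℝ :=
  ∑ j ∈ Finset.range (n + 1), (Nat.choose j (n - j) : ℝ) * x j

/-- Multiplication by `(J(1) + J(0))ᵀ`. -/
noncomputable def Sneg1 (x : ℕ → ℝ) : ℕ → ℝ
  | 0 => x 0
  | n + 1 => x (n + 1) + 2 * x n

/-- `applyS m x = S_{l_m} ∘ ⋯ ∘ S_{l_1} x` where `l_i = (-1)^(i+1)`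
(so `S1` is applied first and the operators alternate). -/
noncomputable def applyS : ℕ → (ℕ → ℝ) → (ℕ → ℝ)
  | 0, x => x
  | m + 1, x => (if (m + 1) % 2 = 1 then S1 else Sneg1) (applyS m x)

/-!
A finitely supported sequence is the coefficient sequence of a polynomial `p`, and the sums
`∑ₖ choose k n (-1)ᵏ pₖ` are the coefficients of `p(-(X + 1))`. So (inverse) invariant sequences
correspond to polynomials that are symmetric (antisymmetric) under the reflection `X ↦ -(X + 1)`.
The operator `S1` sends `p` to `p(X(X + 1))`, which is symmetric for every `p`, and `Sneg1` sends
`p` to `(1 + 2X)p`, where `1 + 2X` is antisymmetric.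
-/

open Polynomial

section Polynomial

variable {R : Type*} [Semiring R]

theorem finite_support_coeff (p : R[X]) : (Function.support p.coeff).Finite :=
  p.support.finite_toSet.subset fun _ hk => mem_support_iff.mpr hk

theorem exists_coeff_eq_of_finite_support {x : ℕ → R} (hx : (Function.support x).Finite) :
    ∃ p : R[X], p.coeff = x :=
  ⟨.ofFinsupp (.ofCoeff (.ofSupportFinite x hx)), rfl⟩

theorem coeff_comp_eq_finsum (p q : R[X]) (n : ℕ) :
    (p.comp q).coeff n = ∑ᶠ k, p.coeff k * (q ^ k).coeff n := by
  have hsupp : (Function.support fun k => p.coeff k * (q ^ k).coeff n) ⊆ p.support :=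
    fun k hk => mem_support_iff.mpr (left_ne_zero_of_mul hk)
  rw [finsum_eq_sum_of_support_subset _ hsupp, comp_eq_sum_left, sum_def, finsetSum_coeff]
  simp only [coeff_C_mul]

theorem coeff_X_mul_X_add_one_pow (j n : ℕ) :
    ((X * (X + 1) : R[X]) ^ j).coeff n = if j ≤ n then (j.choose (n - j) : R) else 0 := by
  rw [(commute_X (X + 1 : R[X])).mul_pow, coeff_X_pow_mul', coeff_X_add_one_pow]

end Polynomial

section InvariantSequences

variable {R : Type*} [CommRing R]

/-- The alternating binomial transform `a ↦ (∑ₖ choose k n (-1)ᵏ aₖ)ₙ`, whose fixed points are the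
invariant sequences of the second kind. An entry whose sum has infinitely many nonzero terms is `0`,
by the convention for `∑ᶠ`. -/
noncomputable def altBinomialTransform (a : ℕ → R) (n : ℕ) : R :=
  ∑ᶠ k, (Nat.choose k n : R) * (-1) ^ k * a k

/-- Invariant sequences of the second kind. Finite support is part of the notion, so that the sums
in `altBinomialTransform` are genuine. -/
structure IsInvariantSeq (a : ℕ → R) : Prop where
  finite_support : (Function.support a).Finite
  altBinomialTransform_eq : altBinomialTransform a = a

/-- Inverse invariant sequences of the second kind, again with finite support as part of the
notion. -/
structure IsInverseInvariantSeq (a : ℕ → R) : Prop where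
  finite_support : (Function.support a).Finite
  altBinomialTransform_eq : altBinomialTransform a = -a

theorem altBinomialTransform_coeff (p : R[X]) :
    altBinomialTransform p.coeff = (p.comp (-(X + 1))).coeff := by
  funext n
  rw [coeff_comp_eq_finsum, altBinomialTransform]
  refine finsum_congr fun k => ?_
  have hpow : (-(X + 1) : R[X]) ^ k = C ((-1) ^ k) * (X + 1) ^ k := by
    rw [neg_pow, C_pow, C_neg, C_1]
  rw [hpow, coeff_C_mul, coeff_X_add_one_pow]
  ring

theorem isInvariantSeq_coeff_iff {p : R[X]} :
    IsInvariantSeq p.coeff ↔ p.comp (-(X + 1)) = p := by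
  rw [← coeff_inj, ← altBinomialTransform_coeff]
  exact ⟨fun h => h.altBinomialTransform_eq, fun h => ⟨finite_support_coeff p, h⟩⟩

theorem isInverseInvariantSeq_coeff_iff {p : R[X]} :
    IsInverseInvariantSeq p.coeff ↔ p.comp (-(X + 1)) = -p := by
  have hneg : (-p).coeff = -p.coeff := funext (coeff_neg p)
  rw [← coeff_inj, ← altBinomialTransform_coeff, hneg]
  exact ⟨fun h => h.altBinomialTransform_eq, fun h => ⟨finite_support_coeff p, h⟩⟩

theorem isInvariantSeq_coeff_comp_X_mul_X_add_one (p : R[X]) :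
    IsInvariantSeq (p.comp (X * (X + 1))).coeff := by
  have hsymm : (X * (X + 1) : R[X]).comp (-(X + 1)) = X * (X + 1) := by
    simp only [mul_comp, add_comp, X_comp, one_comp]
    ring
  rw [isInvariantSeq_coeff_iff, comp_assoc, hsymm]

theorem IsInvariantSeq.isInverseInvariantSeq_one_add_two_mul_X_mul {p : R[X]}
    (hp : IsInvariantSeq p.coeff) : IsInverseInvariantSeq ((1 + 2 * X) * p).coeff := by
  have hanti : (1 + 2 * X : R[X]).comp (-(X + 1)) = -(1 + 2 * X) := by
    simp only [add_comp, mul_comp, X_comp, one_comp, ofNat_comp, Nat.cast_ofNat]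
    ring
  rw [isInverseInvariantSeq_coeff_iff, mul_comp, hanti, isInvariantSeq_coeff_iff.mp hp, neg_mul]

end InvariantSequences

theorem S1_coeff (p : ℝ[X]) : S1 p.coeff = (p.comp (X * (X + 1))).coeff := by
  funext n
  simp only [coeff_comp_eq_finsum, coeff_X_mul_X_add_one_pow]
  rw [finsum_eq_sum_of_support_subset (s := Finset.range (n + 1)), S1]
  · refine Finset.sum_congr rfl fun j hj => ?_
    rw [if_pos (Finset.mem_range_succ_iff.mp hj), mul_comm]
  · intro j hj
    have hjn : j ≤ n := by
      by_contra h
      simp [h] at hj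
    exact Finset.mem_coe.mpr (Finset.mem_range_succ_iff.mpr hjn)

theorem Sneg1_coeff (p : ℝ[X]) : Sneg1 p.coeff = ((1 + 2 * X) * p).coeff := by
  funext n
  cases n <;> simp [Sneg1, add_mul, mul_assoc, coeff_ofNat_mul]

theorem isInvariantSeq_S1 {x : ℕ → ℝ} (hx : (Function.support x).Finite) :
    IsInvariantSeq (S1 x) := by
  obtain ⟨p, rfl⟩ := exists_coeff_eq_of_finite_support hx
  rw [S1_coeff]
  exact isInvariantSeq_coeff_comp_X_mul_X_add_one p

theorem IsInvariantSeq.isInverseInvariantSeq_Sneg1 {x : ℕ → ℝ} (hx : IsInvariantSeq x) :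
    IsInverseInvariantSeq (Sneg1 x) := by
  obtain ⟨p, rfl⟩ := exists_coeff_eq_of_finite_support hx.finite_support
  rw [Sneg1_coeff]
  exact hx.isInverseInvariantSeq_one_add_two_mul_X_mul

theorem finite_support_Sneg1 {x : ℕ → ℝ} (hx : (Function.support x).Finite) :
    (Function.support (Sneg1 x)).Finite := by
  obtain ⟨p, rfl⟩ := exists_coeff_eq_of_finite_support hx
  rw [Sneg1_coeff]
  exact finite_support_coeff _

theorem applyS_succ_of_even {m : ℕ} (hm : Even m) (x : ℕ → ℝ) :
    applyS (m + 1) x = S1 (applyS m x) := by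
  rw [applyS, if_pos (Nat.odd_iff.mp hm.add_one)]

theorem applyS_succ_of_odd {m : ℕ} (hm : Odd m) (x : ℕ → ℝ) :
    applyS (m + 1) x = Sneg1 (applyS m x) := by
  rw [applyS, if_neg (by grind)]

theorem finite_support_applyS {x : ℕ → ℝ} (hx : (Function.support x).Finite) (m : ℕ) :
    (Function.support (applyS m x)).Finite := by
  induction m with
  | zero => exact hx
  | succ m ih =>
    rcases m.even_or_odd with hm | hm
    · rw [applyS_succ_of_even hm]
      exact (isInvariantSeq_S1 ih).finite_support
    · rw [applyS_succ_of_odd hm]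
      exact finite_support_Sneg1 ih

theorem isInvariantSeq_applyS {x : ℕ → ℝ} (hx : (Function.support x).Finite) {m : ℕ}
    (hm : Odd m) : IsInvariantSeq (applyS m x) := by
  obtain ⟨k, rfl⟩ := hm
  rw [applyS_succ_of_even (even_two_mul k)]
  exact isInvariantSeq_S1 (finite_support_applyS hx _)

theorem isInverseInvariantSeq_applyS {x : ℕ → ℝ} (hx : (Function.support x).Finite) {m : ℕ}
    (hm : Even m) (hm0 : m ≠ 0) : IsInverseInvariantSeq (applyS m x) := by
  obtain ⟨k, rfl⟩ := Nat.exists_eq_succ_of_ne_zero hm0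
  have hk : Odd k := by simpa [Nat.even_add_one] using hm
  rw [Nat.succ_eq_add_one, applyS_succ_of_odd hk]
  exact (isInvariantSeq_applyS hx hk).isInverseInvariantSeq_Sneg1

/-- for finitely supported `x` and `m ≥ 1`, `z = applyS m x` is
finitely supported; it is an invariant sequence of the second kind when `m` is odd
and an inverse invariant sequence of the second kind when `m` is even. -/
theorem stmt15 (x : ℕ → ℝ) (hx : (Function.support x).Finite) (m : ℕ) (hm : 1 ≤ m) :
    (Function.support (applyS m x)).Finite ∧
    (Odd m → ∀ n, ∑ᶠ k, (Nat.choose k n : ℝ) * (-1) ^ k * applyS m x k = applyS m x n) ∧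
    (Even m → ∀ n, ∑ᶠ k, (Nat.choose k n : ℝ) * (-1) ^ k * applyS m x k = -applyS m x n) := by
  refine ⟨finite_support_applyS hx m, fun hodd n => ?_, fun heven n => ?_⟩
  · exact congrFun (isInvariantSeq_applyS hx hodd).altBinomialTransform_eq n
  · exact congrFun (isInverseInvariantSeq_applyS hx heven
      (Nat.one_le_iff_ne_zero.mp hm)).altBinomialTransform_eq n
end
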